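/- arXiv:2102.09411 — 2 statements merged into one kernel-verified Lean document; each statement's English description precedes it below -/
import Mathlib

section
/- Let G be the subgroup of GL₄(𝔽₂) generated by g₁ = [[1,0,0,0],[0,1,0,0],[0,0,0,1],[0,0,1,0]] and g₂ = [[0,1,0,1],[1,0,0,0],[0,0,0,1],[1,0,1,0]]. Let K₈ be the subgroup of G generated by [[1,0,0,1],[0,1,0,0],[0,1,1,0],[0,0,0,1]] and [[1,0,0,0],[0,1,0,0],[0,0,0,1],[0,0,1,0]]; let K₁₂ be the subgroup generated by [[1,1,1,1],[1,0,0,0],[1,0,0,1],[1,0,1,0]], [[1,0,0,0],[1,1,1,1],[1,0,0,1],[1,0,1,0]], and [[1,0,0,0],[0,1,0,0],[0,0,0,1],[0,0,1,0]]; and let K₃₆ be the subgroup generated by [[1,0,0,0],[1,1,1,1],[1,0,1,0],[1,0,0,1]], [[0,1,1,0],[0,0,0,1],[1,0,0,1],[0,1,0,0]], and [[1,0,0,1],[0,1,0,0],[0,1,1,0],[0,0,0,1]]. Then K₈, K₁₂, K₃₆ have respectively 8, 12 and 36 elements; neither K₈ nor K₁₂ is a normal subgroup of G, while K₃₆ is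 a normal subgroup of G of index 2. -/
/-!
Each of the three subgroups is a dihedral group or a product of two dihedral groups, with explicit
generators that are short words in the given matrices.

* If `r` has order `n ≥ 3`, `s` is an involution and `s r s⁻¹ = r⁻¹`, then `⟨r, s⟩` is a faithful
  image of the dihedral group of order `2 n` (`exists_dihedral_hom`). With `r = k₁ k₂`, `s = k₂` this
  gives `K₈ ≅ D₄`, and with `r = l₁ l₃`, `s = l₂` it gives `K₁₂ ≅ D₆`.
* `K₃₆` is generated by two commuting copies `A = ⟨r, n₃⟩` and `B = ⟨R, S⟩` of `S₃ = D₃`, where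
  `r = (n₁ n₃)²`, `R = n₁ n₂ r` and `S = n₂ n₃`. An element of `A ∩ B` is central in `A`, and `D₃`
  has trivial centre, so `K₃₆ ≅ S₃ × S₃` has `36` elements.
* `g₁² = 1`, and both `g₂` and `g₁ g₂ g₁` lie in `K₃₆`, so `G` is the union of `K₃₆` and `K₃₆ g₁`.
  The matrix `g₁` itself is not in `K₃₆`: conjugation by `g₁` takes `r ∈ A` to `R ∈ B`, whereas
  every element of `K₃₆` normalises `A`. Hence the index is `2`, and normality follows.
* `K₈` fixes the vector `e₁` and `K₁₂` fixes `e₃ + e₄`. If `K` is a normal subgroup of `G` that fixes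
  `v`, then `K` fixes `g v` for every `g ∈ G`; for `g = g₂` this fails in both cases.
-/

/-! ### Dihedral subgroups, commuting products and index two -/

section Dihedral

variable {P : Type*} [Group P]

/-- Elements `r` of order `n ≥ 3` and `s` with `s² = 1`, `s r s⁻¹ = r⁻¹` generate a faithful image
of the dihedral group. The relation `s r s⁻¹ = r⁻¹` is written `r s r = s`. -/
lemma exists_dihedral_hom {n : ℕ} (hn : 3 ≤ n) (r s : P) (hr : orderOf r = n) (hs : s * s = 1)
    (h : r * s * r = s) :
    ∃ φ : DihedralGroup n →* P, Function.Injective φ ∧ φ.range = Subgroup.closure {r, s} := by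
  have hcomm : SemiconjBy s r r⁻¹ := by
    rw [SemiconjBy, eq_inv_mul_iff_mul_eq, ← mul_assoc, h]
  let ρ : ZMod n →+ Additive P :=
    ZMod.lift n ⟨zmultiplesHom (Additive P) (Additive.ofMul r), by
      rw [zmultiplesHom_apply, natCast_zsmul, ← ofMul_pow, ← hr, pow_orderOf_eq_one, ofMul_one]⟩
  let f : ZMod n → P := fun i => (ρ i).toMul
  have f_int : ∀ k : ℤ, f k = r ^ k := fun k => by
    simp only [f, ρ, ZMod.lift_coe, zmultiplesHom_apply, toMul_zsmul, toMul_ofMul]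
  have f_add : ∀ i j, f (i + j) = f i * f j := fun i j => by simp [f]
  have f_zero : f 0 = 1 := by simp [f]
  have f_neg : ∀ i, f i * s = s * f (-i) := fun i => by
    obtain ⟨k, rfl⟩ := ZMod.intCast_surjective i
    rw [← Int.cast_neg, f_int, f_int]
    have := (hcomm.zpow_right (-k)).eq
    rw [this, inv_zpow, zpow_neg, inv_inv]
  let φ : DihedralGroup n →* P := MonoidHom.mk'
    (fun x => match x with
      | .r i => f i
      | .sr i => s * f i) (by
    rintro (i | i) (j | j)
    · exact f_add i j
    · change s * f (j - i) = f i * (s * f j)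
      rw [← mul_assoc, f_neg, mul_assoc, ← f_add, neg_add_eq_sub]
    · change s * f (i + j) = s * f i * f j
      rw [f_add, mul_assoc]
    · change f (j - i) = s * f i * (s * f j)
      rw [mul_assoc, ← mul_assoc (f i), f_neg, ← mul_assoc, ← mul_assoc, hs, one_mul, ← f_add,
        neg_add_eq_sub])
  have φ_r : ∀ i, φ (.r i) = f i := fun _ => rfl
  have φ_sr : ∀ i, φ (.sr i) = s * f i := fun _ => rfl
  refine ⟨φ, (injective_iff_map_eq_one φ).2 ?_, le_antisymm ?_ ?_⟩
  · rintro (i | i) hi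
    · obtain ⟨k, rfl⟩ := ZMod.intCast_surjective i
      rw [φ_r, f_int, ← orderOf_dvd_iff_zpow_eq_one, hr] at hi
      rw [(ZMod.intCast_zmod_eq_zero_iff_dvd k n).2 hi, DihedralGroup.r_zero]
    · -- Otherwise `s` is a power of `r`, so it commutes with `r`, which forces `r² = 1`.
      exfalso
      obtain ⟨k, rfl⟩ := ZMod.intCast_surjective i
      rw [φ_sr, f_int, mul_eq_one_iff_eq_inv] at hi
      have hc : Commute r s := hi ▸ ((Commute.refl r).zpow_right k).inv_right
      have h2 : r ^ 2 = 1 := by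
        rw [hc.eq, mul_assoc, mul_eq_left] at h
        rw [pow_two, h]
      have := Nat.le_of_dvd two_pos (hr ▸ orderOf_dvd_of_pow_eq_one h2)
      omega
  · have hrm : r ∈ Subgroup.closure {r, s} := Subgroup.subset_closure (by simp)
    have hsm : s ∈ Subgroup.closure {r, s} := Subgroup.subset_closure (by simp)
    have hf : ∀ i, f i ∈ Subgroup.closure {r, s} := fun i => by
      obtain ⟨k, rfl⟩ := ZMod.intCast_surjective i
      rw [f_int]
      exact zpow_mem hrm k
    rintro _ ⟨i | i, rfl⟩
    · exact hf i
    · exact mul_mem hsm (hf i)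
  · rw [Subgroup.closure_le]
    rintro x (rfl | rfl)
    · exact ⟨.r ((1 : ℤ) : ZMod n), by rw [φ_r, f_int, zpow_one]⟩
    · exact ⟨.sr 0, by rw [φ_sr, f_zero, mul_one]⟩

lemma card_closure_dihedral {n : ℕ} (hn : 3 ≤ n) (r s : P) (hr : orderOf r = n) (hs : s * s = 1)
    (h : r * s * r = s) : Nat.card (Subgroup.closure {r, s}) = 2 * n := by
  obtain ⟨φ, hφ, hrange⟩ := exists_dihedral_hom hn r s hr hs h
  rw [← hrange, ← Nat.card_congr (MonoidHom.ofInjective hφ).toEquiv, DihedralGroup.nat_card]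

/-- A dihedral subgroup `⟨r, s⟩` with `r` of odd order has trivial centre, so it meets its
centraliser trivially. -/
lemma disjoint_centralizer_dihedral {n : ℕ} (hn : 3 ≤ n) (hodd : Odd n) (r s : P)
    (hr : orderOf r = n) (hs : s * s = 1) (h : r * s * r = s) :
    Disjoint (Subgroup.closure {r, s})
      (Subgroup.centralizer (Subgroup.closure {r, s} : Set P)) := by
  obtain ⟨φ, hφ, hrange⟩ := exists_dihedral_hom hn r s hr hs h
  rw [← hrange, Subgroup.disjoint_def]
  rintro _ ⟨d, rfl⟩ hd
  have hdc : d ∈ Subgroup.center (DihedralGroup n) :=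
    Subgroup.mem_center_iff.2 fun e => hφ <| by
      rw [map_mul, map_mul]
      exact Subgroup.mem_centralizer_iff.1 hd (φ e) ⟨e, rfl⟩
  rw [DihedralGroup.center_eq_bot_of_odd_ne_one hodd (by omega), Subgroup.mem_bot] at hdc
  rw [hdc, map_one]

lemma card_sup_of_le_centralizer {A B : Subgroup P}
    (hcomm : B ≤ Subgroup.centralizer (A : Set P)) (hd : Disjoint A B) :
    Nat.card (A ⊔ B : Subgroup P) = Nat.card A * Nat.card B := by
  have hc : ∀ (a : A) (b : B), Commute (A.subtype a) (B.subtype b) := fun a b =>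
    Subgroup.mem_centralizer_iff.1 (hcomm b.2) a a.2
  have hinj := (MonoidHom.noncommCoprod_injective A.subtype B.subtype hc).2
    ⟨A.subtype_injective, B.subtype_injective, by rwa [A.range_subtype, B.range_subtype]⟩
  have hrange := MonoidHom.noncommCoprod_range A.subtype B.subtype hc
  rw [A.range_subtype, B.range_subtype] at hrange
  rw [← hrange, ← Nat.card_congr (MonoidHom.ofInjective hinj).toEquiv, Nat.card_prod]

lemma closure_le_centralizer_closure {s t : Set P} (h : ∀ x ∈ s, ∀ y ∈ t, x * y = y * x) :
    Subgroup.closure t ≤ Subgroup.centralizer (Subgroup.closure s : Set P) := by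
  rw [Subgroup.centralizer_closure, Subgroup.closure_le]
  exact fun y hy => Subgroup.mem_centralizer_iff.2 fun x hx => h x hx y hy

/-- If `g₁² = 1` and `H` contains `g₂` and `g₁ g₂ g₁` but not `g₁`, then `⟨g₁, g₂⟩` is the disjoint
union of `H` and `H g₁`. -/
lemma index_two_of_generators {g₁ g₂ : P} {H : Subgroup P} (hinv : g₁ * g₁ = 1)
    (h₁ : g₁ ∉ H) (h₂ : g₂ ∈ H) (h₃ : g₁ * g₂ * g₁ ∈ H) :
    (H.subgroupOf (Subgroup.closure {g₁, g₂})).index = 2 := by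
  have hg : g₁⁻¹ = g₁ := inv_eq_of_mul_eq_one_left hinv
  have e : ∀ x y, x * g₁ * (g₁ * y * g₁) = x * y * g₁ := fun x y => by
    rw [mul_assoc g₁ y, mul_assoc x, ← mul_assoc g₁ g₁, hinv, one_mul, ← mul_assoc]
  have key : ∀ x ∈ Subgroup.closure {g₁, g₂}, x * g₁ ∈ H ∨ x ∈ H := by
    intro x hx
    induction hx using Subgroup.closure_induction_right with
    | one => exact Or.inr (one_mem H)
    | mul_right x _ y hy ih =>
      rcases hy with rfl | rfl
      · rw [mul_assoc, hinv, mul_one]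
        exact ih.symm
      · rcases ih with ih | ih
        · left
          rw [← e]
          exact mul_mem ih h₃
        · exact Or.inr (mul_mem ih h₂)
    | mul_inv_cancel x _ y hy ih =>
      rcases hy with rfl | rfl
      · rw [hg, mul_assoc, hinv, mul_one]
        exact ih.symm
      · rcases ih with ih | ih
        · left
          have h₃' := inv_mem h₃
          rw [mul_inv_rev, mul_inv_rev, hg, ← mul_assoc] at h₃'
          rw [← e]
          exact mul_mem ih h₃'
        · exact Or.inr (mul_mem ih (inv_mem h₂))
  rw [Subgroup.index_eq_two_iff_exists_notMem_and]
  exact ⟨⟨g₁, Subgroup.subset_closure (by simp)⟩, h₁, fun b => key b b.2⟩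

end Dihedral

/-! ### Normal subgroups of matrix groups and fixed vectors -/

/-- If all elements of `S` fix the vector `v` and `⟨S⟩` is normal in `G`, then each `k ∈ S` fixes
`g v` for each `g ∈ G`. -/
lemma mulVec_eq_of_normal {n R : Type*} [Fintype n] [DecidableEq n] [CommRing R]
    {S : Set (GL n R)} {G : Subgroup (GL n R)} (hle : Subgroup.closure S ≤ G)
    (hN : ((Subgroup.closure S).subgroupOf G).Normal) (v : n → R)
    (hv : ∀ x ∈ S, (x : Matrix n n R).mulVec v = v) {g k : GL n R} (hg : g ∈ G)
    (hk : k ∈ S) :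
    (k : Matrix n n R).mulVec ((g : Matrix n n R).mulVec v) = (g : Matrix n n R).mulVec v := by
  have hfix : ∀ x ∈ Subgroup.closure S, (x : Matrix n n R).mulVec v = v := by
    intro x hx
    induction hx using Subgroup.closure_induction with
    | mem x hx => exact hv x hx
    | one => simp
    | mul x y _ _ ihx ihy => rw [Units.val_mul, ← Matrix.mulVec_mulVec, ihy, ihx]
    | inv x _ ih =>
      conv_lhs => rw [← ih]
      rw [Matrix.mulVec_mulVec, ← Units.val_mul, inv_mul_cancel, Units.val_one, Matrix.one_mulVec]
  have hkc := Subgroup.subset_closure hk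
  have hconj := hN.conj_mem ⟨k, hle hkc⟩ hkc ⟨g⁻¹, inv_mem hg⟩
  have h := hfix (g⁻¹ * k * g⁻¹⁻¹) hconj
  rw [inv_inv, mul_assoc, Units.val_mul, ← Matrix.mulVec_mulVec] at h
  apply_fun (g : Matrix n n R).mulVec at h
  rwa [Matrix.mulVec_mulVec, ← Units.val_mul, mul_inv_cancel, Units.val_one, Matrix.one_mulVec,
    Units.val_mul, ← Matrix.mulVec_mulVec] at h


/-! ### The subgroups of `O(T_X^♯)` -/

/-- Let `G` be the subgroup of `GL₄(𝔽₂)` generated by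
`g₁ = [[1,0,0,0],[0,1,0,0],[0,0,0,1],[0,0,1,0]]` and
`g₂ = [[0,1,0,1],[1,0,0,0],[0,0,0,1],[1,0,1,0]]`, and let `K₈`, `K₁₂`, `K₃₆` be the
subgroups of `G` generated by the indicated matrices.  Then `K₈`, `K₁₂` and `K₃₆`
have respectively `8`, `12` and `36` elements; neither `K₈` nor `K₁₂` is a normal
subgroup of `G`, while `K₃₆` is a normal subgroup of `G` of index `2`. -/
theorem subgroups_K8_K12_K36_O_disc_U2_U2
    (g₁ g₂ k₁ k₂ l₁ l₂ l₃ n₁ n₂ n₃ : GL (Fin 4) (ZMod 2))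
    (hg₁ : (g₁ : Matrix (Fin 4) (Fin 4) (ZMod 2)) =
      !![1,0,0,0; 0,1,0,0; 0,0,0,1; 0,0,1,0])
    (hg₂ : (g₂ : Matrix (Fin 4) (Fin 4) (ZMod 2)) =
      !![0,1,0,1; 1,0,0,0; 0,0,0,1; 1,0,1,0])
    (hk₁ : (k₁ : Matrix (Fin 4) (Fin 4) (ZMod 2)) =
      !![1,0,0,1; 0,1,0,0; 0,1,1,0; 0,0,0,1])
    (hk₂ : (k₂ : Matrix (Fin 4) (Fin 4) (ZMod 2)) =
      !![1,0,0,0; 0,1,0,0; 0,0,0,1; 0,0,1,0])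
    (hl₁ : (l₁ : Matrix (Fin 4) (Fin 4) (ZMod 2)) =
      !![1,1,1,1; 1,0,0,0; 1,0,0,1; 1,0,1,0])
    (hl₂ : (l₂ : Matrix (Fin 4) (Fin 4) (ZMod 2)) =
      !![1,0,0,0; 1,1,1,1; 1,0,0,1; 1,0,1,0])
    (hl₃ : (l₃ : Matrix (Fin 4) (Fin 4) (ZMod 2)) =
      !![1,0,0,0; 0,1,0,0; 0,0,0,1; 0,0,1,0])
    (hn₁ : (n₁ : Matrix (Fin 4) (Fin 4) (ZMod 2)) =
      !![1,0,0,0; 1,1,1,1; 1,0,1,0; 1,0,0,1])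
    (hn₂ : (n₂ : Matrix (Fin 4) (Fin 4) (ZMod 2)) =
      !![0,1,1,0; 0,0,0,1; 1,0,0,1; 0,1,0,0])
    (hn₃ : (n₃ : Matrix (Fin 4) (Fin 4) (ZMod 2)) =
      !![1,0,0,1; 0,1,0,0; 0,1,1,0; 0,0,0,1])
    (G K₈ K₁₂ K₃₆ : Subgroup (GL (Fin 4) (ZMod 2)))
    (hG : G = Subgroup.closure {g₁, g₂})
    (hK₈ : K₈ = Subgroup.closure {k₁, k₂})
    (hK₁₂ : K₁₂ = Subgroup.closure {l₁, l₂, l₃})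
    (hK₃₆ : K₃₆ = Subgroup.closure {n₁, n₂, n₃}) :
    K₈ ≤ G ∧ K₁₂ ≤ G ∧ K₃₆ ≤ G ∧
    Nat.card K₈ = 8 ∧ Nat.card K₁₂ = 12 ∧ Nat.card K₃₆ = 36 ∧
    ¬ (K₈.subgroupOf G).Normal ∧ ¬ (K₁₂.subgroupOf G).Normal ∧
    (K₃₆.subgroupOf G).Normal ∧ (K₃₆.subgroupOf G).index = 2 := by
  have hw {x y : GL (Fin 4) (ZMod 2)}
      (h : (x : Matrix (Fin 4) (Fin 4) (ZMod 2)) = y) : x = y := Units.ext h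
  -- The two commuting copies of `S₃` inside `K₃₆` are `⟨r, n₃⟩` and `⟨R, S⟩`.
  obtain ⟨r, hr⟩ : ∃ r, r = n₁ * n₃ * n₁ * n₃ := ⟨_, rfl⟩
  obtain ⟨R, hR⟩ : ∃ R, R = n₁ * n₂ * r := ⟨_, rfl⟩
  obtain ⟨S, hS⟩ : ∃ S, S = n₂ * n₃ := ⟨_, rfl⟩
  have hrv : (r : Matrix (Fin 4) (Fin 4) (ZMod 2)) =
      !![0,0,0,1; 0,1,1,0; 0,1,0,0; 1,0,0,1] := by
    rw [hr]; simp only [Units.val_mul, hn₁, hn₃]; decide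
  have hRv : (R : Matrix (Fin 4) (Fin 4) (ZMod 2)) =
      !![0,0,1,0; 0,1,0,1; 1,0,1,0; 0,1,0,0] := by
    rw [hR]; simp only [Units.val_mul, hn₁, hn₂, hrv]; decide
  have hSv : (S : Matrix (Fin 4) (Fin 4) (ZMod 2)) =
      !![0,0,1,0; 0,0,0,1; 1,0,0,0; 0,1,0,0] := by
    rw [hS]; simp only [Units.val_mul, hn₂, hn₃]; decide
  -- The generators as words in `g₁` and `g₂`.
  have g_inv : g₁ * g₁ = 1 := hw (by simp only [Units.val_mul, Units.val_one, hg₁]; decide)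
  have g₁_mem : g₁ ∈ G := hG ▸ Subgroup.subset_closure (by simp)
  have g₂_mem : g₂ ∈ G := hG ▸ Subgroup.subset_closure (by simp)
  have k₂_eq : k₂ = g₁ := hw (hk₂.trans hg₁.symm)
  have l₃_eq : l₃ = g₁ := hw (hl₃.trans hg₁.symm)
  have k₁_eq : k₁ = g₂ * g₁ * g₂ * g₂ * g₁ * g₂ * g₂ :=
    hw (by simp only [Units.val_mul, hk₁, hg₁, hg₂]; decide)
  have k₁_mem : k₁ ∈ G := by
    rw [k₁_eq]
    apply_rules [mul_mem, g₁_mem, g₂_mem]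
  have l₁_eq : l₁ = g₂ * g₁ * g₂ * g₂ * g₁ * g₂ * g₂ * g₂ :=
    hw (by simp only [Units.val_mul, hl₁, hg₁, hg₂]; decide)
  have l₁_mem : l₁ ∈ G := by
    rw [l₁_eq]
    apply_rules [mul_mem, g₁_mem, g₂_mem]
  have l₂_eq : l₂ = g₁ * g₂ * g₁ * g₂ * g₁ * g₂ * g₂ :=
    hw (by simp only [Units.val_mul, hl₂, hg₁, hg₂]; decide)
  have l₂_mem : l₂ ∈ G := by
    rw [l₂_eq]
    apply_rules [mul_mem, g₁_mem, g₂_mem]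
  have n₁_eq : n₁ = g₂ * g₁ * g₂ * g₁ * g₂ * g₂ :=
    hw (by simp only [Units.val_mul, hn₁, hg₁, hg₂]; decide)
  have n₁_mem : n₁ ∈ G := by
    rw [n₁_eq]
    apply_rules [mul_mem, g₁_mem, g₂_mem]
  have n₂_eq : n₂ = g₁ * g₂ * g₁ * g₂ * g₂ * g₂ :=
    hw (by simp only [Units.val_mul, hn₂, hg₁, hg₂]; decide)
  have n₂_mem : n₂ ∈ G := by
    rw [n₂_eq]
    apply_rules [mul_mem, g₁_mem, g₂_mem]
  have n₃_eq : n₃ = k₁ := hw (hn₃.trans hk₁.symm)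
  have n₃_mem : n₃ ∈ G := n₃_eq ▸ k₁_mem
  have hle₈ : K₈ ≤ G := by
    rw [hK₈, Subgroup.closure_le]
    rintro x (rfl | rfl)
    exacts [k₁_mem, k₂_eq ▸ g₁_mem]
  have hle₁₂ : K₁₂ ≤ G := by
    rw [hK₁₂, Subgroup.closure_le]
    rintro x (rfl | rfl | rfl)
    exacts [l₁_mem, l₂_mem, l₃_eq ▸ g₁_mem]
  have hle₃₆ : K₃₆ ≤ G := by
    rw [hK₃₆, Subgroup.closure_le]
    rintro x (rfl | rfl | rfl)
    exacts [n₁_mem, n₂_mem, n₃_mem]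
  -- `K₈` is dihedral with rotation `k₁ k₂` and reflection `k₂`.
  have k_inv : k₂ * k₂ = 1 := hw (by simp only [Units.val_mul, Units.val_one, hk₂]; decide)
  have k_rel : k₁ * k₂ * k₂ * (k₁ * k₂) = k₂ :=
    hw (by simp only [Units.val_mul, hk₁, hk₂]; decide)
  have k_pow : (k₁ * k₂) ^ 4 = 1 :=
    hw (by simp only [Units.val_mul, Units.val_one, Units.val_pow_eq_pow_val, hk₁, hk₂]; decide)
  have k_ne : (k₁ * k₂) ^ 2 ≠ 1 := fun h => by
    apply_fun Units.val at h
    simp only [Units.val_mul, Units.val_one, Units.val_pow_eq_pow_val, hk₁, hk₂] at h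
    revert h; decide
  have hgen₈ : K₈ = Subgroup.closure {k₁ * k₂, k₂} := by
    rw [hK₈]
    apply le_antisymm <;> rw [Subgroup.closure_le]
    · have h₁ : k₁ * k₂ ∈ Subgroup.closure {k₁ * k₂, k₂} := Subgroup.subset_closure (by simp)
      have h₂ : k₂ ∈ Subgroup.closure {k₁ * k₂, k₂} := Subgroup.subset_closure (by simp)
      rintro x (rfl | rfl)
      · exact (Subgroup.mul_mem_cancel_right _ h₂).1 h₁
      · exact h₂
    · have h₁ : k₁ ∈ Subgroup.closure {k₁, k₂} := Subgroup.subset_closure (by simp)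
      have h₂ : k₂ ∈ Subgroup.closure {k₁, k₂} := Subgroup.subset_closure (by simp)
      rintro x (rfl | rfl)
      exacts [mul_mem h₁ h₂, h₂]
  have hcard₈ : Nat.card K₈ = 8 := by
    have : Fact (Nat.Prime 2) := ⟨Nat.prime_two⟩
    rw [hgen₈]
    exact card_closure_dihedral (n := 4) (by norm_num) _ _
      (orderOf_eq_prime_pow (p := 2) (n := 1) k_ne k_pow) k_inv k_rel
  -- `K₁₂` is dihedral with rotation `l₁ l₃` and reflection `l₂`; `l₃` is the central rotation.
  have l_inv : l₂ * l₂ = 1 := hw (by simp only [Units.val_mul, Units.val_one, hl₂]; decide)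
  have l_rel : l₁ * l₃ * l₂ * (l₁ * l₃) = l₂ :=
    hw (by simp only [Units.val_mul, hl₁, hl₂, hl₃]; decide)
  have l_pow : (l₁ * l₃) ^ 6 = 1 :=
    hw (by simp only [Units.val_mul, Units.val_one, Units.val_pow_eq_pow_val, hl₁, hl₃]; decide)
  have l₃_pow : l₃ = (l₁ * l₃) ^ 3 :=
    hw (by simp only [Units.val_mul, Units.val_pow_eq_pow_val, hl₁, hl₃]; decide)
  have l_ne₂ : (l₁ * l₃) ^ 2 ≠ 1 := fun h => by
    apply_fun Units.val at h
    simp only [Units.val_mul, Units.val_one, Units.val_pow_eq_pow_val, hl₁, hl₃] at h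
    revert h; decide
  have l_ne₃ : (l₁ * l₃) ^ 3 ≠ 1 := fun h => by
    apply_fun Units.val at h
    simp only [Units.val_mul, Units.val_one, Units.val_pow_eq_pow_val, hl₁, hl₃] at h
    revert h; decide
  have hgen₁₂ : K₁₂ = Subgroup.closure {l₁ * l₃, l₂} := by
    rw [hK₁₂]
    apply le_antisymm <;> rw [Subgroup.closure_le]
    · have h₁ : l₁ * l₃ ∈ Subgroup.closure {l₁ * l₃, l₂} := Subgroup.subset_closure (by simp)
      have h₂ : l₂ ∈ Subgroup.closure {l₁ * l₃, l₂} := Subgroup.subset_closure (by simp)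
      have h₃ : l₃ ∈ Subgroup.closure {l₁ * l₃, l₂} := by
        have := pow_mem h₁ 3
        rwa [← l₃_pow] at this
      rintro x (rfl | rfl | rfl)
      exacts [(Subgroup.mul_mem_cancel_right _ h₃).1 h₁, h₂, h₃]
    · have h₁ : l₁ ∈ Subgroup.closure {l₁, l₂, l₃} := Subgroup.subset_closure (by simp)
      have h₂ : l₂ ∈ Subgroup.closure {l₁, l₂, l₃} := Subgroup.subset_closure (by simp)
      have h₃ : l₃ ∈ Subgroup.closure {l₁, l₂, l₃} := Subgroup.subset_closure (by simp)
      rintro x (rfl | rfl)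
      exacts [mul_mem h₁ h₃, h₂]
  have hord₁₂ : orderOf (l₁ * l₃) = 6 := by
    refine orderOf_eq_of_pow_and_pow_div_prime (by norm_num) l_pow fun p hp hdvd => ?_
    have : p = 2 ∨ p = 3 := by
      have h6 : p ∣ 2 * 3 := hdvd
      exact (hp.dvd_mul.1 h6).imp (Nat.prime_dvd_prime_iff_eq hp Nat.prime_two).1
        (Nat.prime_dvd_prime_iff_eq hp Nat.prime_three).1
    rcases this with rfl | rfl
    exacts [l_ne₃, l_ne₂]
  have hcard₁₂ : Nat.card K₁₂ = 12 := by
    rw [hgen₁₂]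
    exact card_closure_dihedral (n := 6) (by norm_num) _ _ hord₁₂ l_inv l_rel
  -- `K₃₆` is the internal direct product of `⟨r, n₃⟩` and `⟨R, S⟩`.
  have n_inv : n₃ * n₃ = 1 := hw (by simp only [Units.val_mul, Units.val_one, hn₃]; decide)
  have n_rel : r * n₃ * r = n₃ := hw (by simp only [Units.val_mul, hrv, hn₃]; decide)
  have r_pow : r ^ 3 = 1 := hw (by simp only [Units.val_one, Units.val_pow_eq_pow_val, hrv]; decide)
  have r_ne : r ≠ 1 := fun h => by
    apply_fun Units.val at h
    simp only [Units.val_one, hrv] at h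
    revert h; decide
  have S_inv : S * S = 1 := hw (by simp only [Units.val_mul, Units.val_one, hSv]; decide)
  have R_rel : R * S * R = S := hw (by simp only [Units.val_mul, hRv, hSv]; decide)
  have R_pow : R ^ 3 = 1 := hw (by simp only [Units.val_one, Units.val_pow_eq_pow_val, hRv]; decide)
  have R_ne : R ≠ 1 := fun h => by
    apply_fun Units.val at h
    simp only [Units.val_one, hRv] at h
    revert h; decide
  have rR : r * R = R * r := hw (by simp only [Units.val_mul, hrv, hRv]; decide)
  have rS : r * S = S * r := hw (by simp only [Units.val_mul, hrv, hSv]; decide)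
  have nR : n₃ * R = R * n₃ := hw (by simp only [Units.val_mul, hn₃, hRv]; decide)
  have nS : n₃ * S = S * n₃ := hw (by simp only [Units.val_mul, hn₃, hSv]; decide)
  have n₁_word : n₁ = n₃ * r * R * S :=
    hw (by simp only [Units.val_mul, hn₁, hn₃, hrv, hRv, hSv]; decide)
  have n₂_word : n₂ = n₃ * S := hw (by simp only [Units.val_mul, hn₂, hn₃, hSv]; decide)
  have g_conj : g₁ * r = R * g₁ := hw (by simp only [Units.val_mul, hg₁, hrv, hRv]; decide)
  have g₂_word : g₂ = n₂ * n₁ * n₃ := hw (by simp only [Units.val_mul, hg₂, hn₁, hn₂, hn₃]; decide)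
  have g₁₂₁_word : g₁ * g₂ * g₁ = n₂ * n₁ * n₃ * n₁ :=
    hw (by simp only [Units.val_mul, hg₁, hg₂, hn₁, hn₂, hn₃]; decide)
  have : Fact (Nat.Prime 3) := ⟨Nat.prime_three⟩
  have r_ord : orderOf r = 3 := orderOf_eq_prime r_pow r_ne
  have R_ord : orderOf R = 3 := orderOf_eq_prime R_pow R_ne
  obtain ⟨A, hA⟩ : ∃ A, A = Subgroup.closure {r, n₃} := ⟨_, rfl⟩
  obtain ⟨B, hB⟩ : ∃ B, B = Subgroup.closure {R, S} := ⟨_, rfl⟩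
  have rA : r ∈ A := hA ▸ Subgroup.subset_closure (by simp)
  have nA : n₃ ∈ A := hA ▸ Subgroup.subset_closure (by simp)
  have RB : R ∈ B := hB ▸ Subgroup.subset_closure (by simp)
  have SB : S ∈ B := hB ▸ Subgroup.subset_closure (by simp)
  have h₁K : n₁ ∈ K₃₆ := hK₃₆ ▸ Subgroup.subset_closure (by simp)
  have h₂K : n₂ ∈ K₃₆ := hK₃₆ ▸ Subgroup.subset_closure (by simp)
  have h₃K : n₃ ∈ K₃₆ := hK₃₆ ▸ Subgroup.subset_closure (by simp)
  have rK : r ∈ K₃₆ := hr ▸ mul_mem (mul_mem (mul_mem h₁K h₃K) h₁K) h₃K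
  have RK : R ∈ K₃₆ := hR ▸ mul_mem (mul_mem h₁K h₂K) rK
  have SK : S ∈ K₃₆ := hS ▸ mul_mem h₂K h₃K
  have hsup : K₃₆ = A ⊔ B := by
    apply le_antisymm
    · have hAle : A ≤ A ⊔ B := le_sup_left
      have hBle : B ≤ A ⊔ B := le_sup_right
      rw [hK₃₆, Subgroup.closure_le]
      rintro x (h | h | h)
      · rw [h, n₁_word]
        exact mul_mem (mul_mem (mul_mem (hAle nA) (hAle rA)) (hBle RB)) (hBle SB)
      · rw [h, n₂_word]
        exact mul_mem (hAle nA) (hBle SB)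
      · rw [h]
        exact hAle nA
    · rw [hA, hB, sup_le_iff, Subgroup.closure_le, Subgroup.closure_le]
      constructor
      · rintro x (h | h) <;> rw [h]
        exacts [rK, h₃K]
      · rintro x (h | h) <;> rw [h]
        exacts [RK, SK]
  have hBA : B ≤ Subgroup.centralizer (A : Set (GL (Fin 4) (ZMod 2))) := by
    rw [hA, hB]
    apply closure_le_centralizer_closure
    rintro x (rfl | rfl) y (rfl | rfl)
    exacts [rR, rS, nR, nS]
  have hdisj : Disjoint A B := by
    refine Disjoint.mono_right hBA ?_
    rw [hA]
    exact disjoint_centralizer_dihedral le_rfl (by decide) _ _ r_ord n_inv n_rel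
  have hcard₃₆ : Nat.card K₃₆ = 36 := by
    rw [hsup, card_sup_of_le_centralizer hBA hdisj, hA, hB,
      card_closure_dihedral le_rfl _ _ r_ord n_inv n_rel,
      card_closure_dihedral le_rfl _ _ R_ord S_inv R_rel]
  -- `K₃₆` normalises `A`, but `g₁` conjugates `r ∈ A` to `R ∈ B`.
  have g₁_notMem : g₁ ∉ K₃₆ := fun h => by
    have hnorm : K₃₆ ≤ Subgroup.normalizer (A : Set (GL (Fin 4) (ZMod 2))) := by
      rw [hsup, sup_le_iff]
      exact ⟨Subgroup.le_normalizer, hBA.trans (Subgroup.centralizer_le_normalizer _)⟩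
    have hmem := (Subgroup.mem_normalizer_iff.1 (hnorm h) r).1 rA
    rw [g_conj, mul_inv_cancel_right] at hmem
    exact R_ne (Subgroup.disjoint_def.1 hdisj hmem RB)
  have hindex : (K₃₆.subgroupOf G).index = 2 := by
    rw [hG]
    refine index_two_of_generators g_inv g₁_notMem ?_ ?_
    · rw [g₂_word]
      exact mul_mem (mul_mem h₂K h₁K) h₃K
    · rw [g₁₂₁_word]
      exact mul_mem (mul_mem (mul_mem h₂K h₁K) h₃K) h₁K
  refine ⟨hle₈, hle₁₂, hle₃₆, hcard₈, hcard₁₂, hcard₃₆, fun hN => ?_, fun hN => ?_,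
    Subgroup.normal_of_index_eq_two hindex, hindex⟩
  · -- `K₈` fixes `e₁`, but `k₂` does not fix `g₂ e₁`.
    subst hK₈
    have h := mulVec_eq_of_normal hle₈ hN ![1, 0, 0, 0] (by
      rintro x (rfl | rfl)
      · rw [hk₁]; decide
      · rw [hk₂]; decide) (k := k₂) g₂_mem (by simp)
    rw [hk₂, hg₂] at h
    revert h; decide
  · -- `K₁₂` fixes `e₃ + e₄`, but `l₁` does not fix `g₂ (e₃ + e₄)`.
    subst hK₁₂
    have h := mulVec_eq_of_normal hle₁₂ hN ![0, 0, 1, 1] (by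
      rintro x (rfl | rfl | rfl)
      · rw [hl₁]; decide
      · rw [hl₂]; decide
      · rw [hl₃]; decide) (k := l₁) g₂_mem (by simp)
    rw [hl₁, hg₂] at h
    revert h; decide
end

section
/- Let a₁, a₂, a₃ ∈ GL₆(𝔽₂) be the matrices a₁ = [[0,0,1,1,1,1],[1,0,1,0,0,0],[1,1,1,1,0,0],[0,1,1,1,1,1],[0,1,0,1,1,0],[0,1,0,1,0,1]], a₂ = [[0,0,0,1,0,0],[0,0,1,0,0,0],[1,0,0,0,0,0],[0,1,0,0,0,0],[0,0,0,0,1,0],[0,0,0,0,0,1]], and a₃ = [[1,0,0,0,0,0],[0,1,0,0,0,0],[0,0,1,0,0,0],[0,0,0,1,0,0],[0,0,0,0,0,1],[0,0,0,0,1,0]]. Then the subgroup of GL₆(𝔽₂) generated by a₁, a₂, a₃ has exactly 1440 elements and exactly 22 conjugacy classes. -/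
/-!
The group is `S₆ × C₂`, acting on `𝔽₂⁶` through the permutation module of `S₆`, with the
generator of `C₂` acting as `1 + J`, where `J` is the all-ones matrix; `J² = 0` because `6` is even,
and `J` commutes with every permutation matrix. This is `permRep`, a faithful representation
(`permRep_injective`).

In the basis of `𝔽₂⁶` given by the columns of `basisMatrix`, each `aᵢ` becomes the product of `1 + J`
with a permutation matrix, of permutations `s₁`, `s₂` and `1` respectively. So the third generator is
the central involution, and the group generated is everything as soon as `s₁` and `s₂` generate `S₆`:
explicit words in them give a `6`-cycle and an adjacent transposition (`closure_perms`).
Hence the subgroup is isomorphic to `S₆ × C₂`, of order `720 * 2`. Its number of conjugacy classes is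
twice that of `S₆`, and the classes of `S₆` correspond to cycle types, that is, to multisets of
integers `≥ 2` with sum `≤ 6`, of which there are `11` (`card_conjClasses_perm_six`).
-/

open Equiv

/-- The group `S₆ × C₂`, with `C₂` the additive group of `𝔽₂` written multiplicatively. -/
abbrev SymTimesTwo : Type := Perm (Fin 6) × Multiplicative (ZMod 2)

/-- The all-ones matrix `J`. -/
def allOnes : Matrix (Fin 6) (Fin 6) (ZMod 2) := Matrix.of fun _ _ => 1

lemma allOnes_mul_self : allOnes * allOnes = 0 := by decide

lemma permMatrixHom_apply (σ : Perm (Fin 6)) (i j : Fin 6) :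
    Matrix.permMatrixHom (R := ZMod 2) σ i j = if i = σ j then 1 else 0 := by
  simp [PEquiv.toMatrix_apply, Equiv.toPEquiv_apply, Equiv.symm_apply_eq]

lemma permMatrix_mul_allOnes (σ : Perm (Fin 6)) :
    Matrix.permMatrixHom (R := ZMod 2) σ * allOnes = allOnes := by
  ext i j
  simp [-Matrix.permMatrixHom_apply, allOnes, Matrix.mul_apply, permMatrixHom_apply,
    ← Equiv.symm_apply_eq]

lemma allOnes_mul_permMatrix (σ : Perm (Fin 6)) :
    allOnes * Matrix.permMatrixHom (R := ZMod 2) σ = allOnes := by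
  ext i j
  simp [-Matrix.permMatrixHom_apply, allOnes, Matrix.mul_apply, permMatrixHom_apply]

/-- The matrix representation of `S₆ × C₂` in which `(σ, e)` acts as the permutation matrix of `σ`
(sending the basis vector `eⱼ` to `e_{σ j}`) times `1 + e • J`. As `J` absorbs permutation matrices,
this product is the permutation matrix plus `e • J`. -/
def permRep : SymTimesTwo →* Matrix (Fin 6) (Fin 6) (ZMod 2) where
  toFun g := Matrix.permMatrixHom g.1 + g.2.toAdd • allOnes
  map_one' := by simp
  map_mul' g h := by
    simp only [Prod.fst_mul, Prod.snd_mul, map_mul, toAdd_mul, add_mul, mul_add, add_smul,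
      Matrix.mul_smul, Matrix.smul_mul, permMatrix_mul_allOnes, allOnes_mul_permMatrix,
      allOnes_mul_self, smul_zero, add_zero]
    abel

lemma permRep_apply (g : SymTimesTwo) (i j : Fin 6) :
    permRep g i j = (if i = g.1 j then 1 else 0) + g.2.toAdd := by
  simp [-Matrix.permMatrixHom_apply, permRep, allOnes, permMatrixHom_apply]

lemma permRep_injective : Function.Injective permRep := by
  rw [injective_iff_map_eq_one]
  rintro ⟨σ, e⟩ h
  have key (i j : Fin 6) : (if i = σ j then 1 else 0) + e.toAdd = if i = j then 1 else 0 := by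
    rw [← permRep_apply (σ, e), h, Matrix.one_apply]
  -- An entry of column `0` off both the diagonal and the support of the permutation matrix is `e`.
  have he : e.toAdd = 0 := by
    obtain ⟨i, h₁, h₂⟩ : ∃ i : Fin 6, i ≠ σ 0 ∧ i ≠ 0 := by
      generalize σ 0 = k
      revert k
      decide
    simpa [h₁, h₂] using key i 0
  have hσ : σ = 1 := by
    ext1 j
    by_contra hj
    rw [Perm.one_apply] at hj
    have := key (σ j) j
    rw [he, if_pos rfl, if_neg hj] at this
    exact absurd this (by decide)
  rw [hσ, Prod.mk_eq_one]
  exact ⟨rfl, he⟩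

/-- The matrix whose columns are the basis of `𝔽₂⁶` that the group permutes up to its central
involution. -/
def basisMatrix : GL (Fin 6) (ZMod 2) where
  val := !![0,0,1,1,1,1; 0,1,0,1,1,1; 1,1,1,0,0,1; 1,1,1,0,1,0; 0,1,1,1,0,0; 1,0,0,0,1,1]
  inv := !![0,0,1,1,0,1; 1,0,1,1,1,0; 0,1,1,1,1,0; 1,1,0,0,1,0; 1,1,1,0,0,1; 1,1,0,1,0,1]
  val_inv := by decide
  inv_val := by decide

/-- The faithful representation `permRep` written in the standard basis of `𝔽₂⁶`. -/
def glRep : SymTimesTwo →* GL (Fin 6) (ZMod 2) :=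
  (MulAut.conj basisMatrix).toMonoidHom.comp permRep.toHomUnits

lemma glRep_injective : Function.Injective glRep := by
  refine (MulAut.conj basisMatrix).injective.comp fun g h hgh => permRep_injective ?_
  exact congrArg Units.val hgh

/-- The permutation underlying `a₁`: the `4`-cycle `(0 4 1 5)`. -/
def s₁ : Perm (Fin 6) := ⟨![4,5,2,3,1,0], ![5,4,2,3,0,1], by decide, by decide⟩

/-- The permutation underlying `a₂`: the product `(0 3)(1 4 2 5)`. -/
def s₂ : Perm (Fin 6) := ⟨![3,4,5,0,2,1], ![3,5,4,0,1,2], by decide, by decide⟩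

lemma closure_perms : Subgroup.closure ({s₁, s₂} : Set (Perm (Fin 6))) = ⊤ := by
  have h₁ : s₁ ∈ Subgroup.closure ({s₁, s₂} : Set (Perm (Fin 6))) :=
    Subgroup.subset_closure (by simp)
  have h₂ : s₂ ∈ Subgroup.closure ({s₁, s₂} : Set (Perm (Fin 6))) :=
    Subgroup.subset_closure (by simp)
  rw [eq_top_iff, ← Perm.closure_cycle_adjacent_swap (isCycle_finRotate (n := 4))
    support_finRotate 0, Subgroup.closure_le]
  rintro _ (rfl | rfl)
  · rw [show finRotate (4 + 2) = s₁ ^ 3 * s₂ ^ 2 * s₁ * s₂ * s₁ * s₂ by decide]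
    exact mul_mem (mul_mem (mul_mem (mul_mem (mul_mem (pow_mem h₁ _) (pow_mem h₂ _)) h₁) h₂) h₁) h₂
  · rw [show swap 0 (finRotate (4 + 2) 0) = s₂ * s₁ * s₂ * s₁ ^ 3 * s₂ * s₁ * s₂ by decide]
    exact mul_mem (mul_mem (mul_mem (mul_mem (mul_mem (mul_mem h₂ h₁) h₂) (pow_mem h₁ _)) h₂) h₁) h₂

/-- The nontrivial element of `C₂`. -/
abbrev gen₂ : Multiplicative (ZMod 2) := Multiplicative.ofAdd 1

/-- Multiplying the first two generators by the third removes their `C₂`-component, which leaves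
generators of `S₆ × 1`. -/
lemma closure_gens :
    Subgroup.closure ({(s₁, gen₂), (s₂, gen₂), (1, gen₂)} : Set SymTimesTwo) = ⊤ := by
  set H := Subgroup.closure ({(s₁, gen₂), (s₂, gen₂), (1, gen₂)} : Set SymTimesTwo)
  have hz : ((1, gen₂) : SymTimesTwo) ∈ H := Subgroup.subset_closure (by simp)
  have hgen : gen₂ * gen₂ = 1 := by decide
  have h₁ : ((s₁, 1) : SymTimesTwo) ∈ H := by
    have : ((s₁, gen₂) : SymTimesTwo) ∈ H := Subgroup.subset_closure (by simp)
    simpa [hgen] using mul_mem this hz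
  have h₂ : ((s₂, 1) : SymTimesTwo) ∈ H := by
    have : ((s₂, gen₂) : SymTimesTwo) ∈ H := Subgroup.subset_closure (by simp)
    simpa [hgen] using mul_mem this hz
  have hσ (σ : Perm (Fin 6)) : ((σ, 1) : SymTimesTwo) ∈ H := by
    have hle : Subgroup.closure {s₁, s₂} ≤ H.comap (MonoidHom.inl _ _) := by
      rw [Subgroup.closure_le]
      rintro _ (rfl | rfl)
      exacts [h₁, h₂]
    rw [closure_perms] at hle
    exact hle (Subgroup.mem_top σ)
  rw [eq_top_iff]
  rintro ⟨σ, e⟩ -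
  obtain rfl | rfl : e = 1 ∨ e = gen₂ := by
    revert e
    decide
  · exact hσ σ
  · simpa using mul_mem (hσ σ) hz

lemma card_conjClasses_congr {G H : Type*} [Group G] [Group H] [Finite G] [Finite H]
    (e : G ≃* H) : Nat.card (ConjClasses G) = Nat.card (ConjClasses H) :=
  le_antisymm
    (Nat.card_le_card_of_surjective (ConjClasses.map e.symm.toMonoidHom)
      (ConjClasses.map_surjective e.symm.surjective))
    (Nat.card_le_card_of_surjective (ConjClasses.map e.toMonoidHom)
      (ConjClasses.map_surjective e.surjective))

lemma card_conjClasses_prod (G H : Type*) [Group G] [Group H] [Finite G] [Finite H] :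
    Nat.card (ConjClasses (G × H)) = Nat.card (ConjClasses G) * Nat.card (ConjClasses H) := by
  have h := commProb_prod G H
  rw [commProb_def', commProb_def', commProb_def', Nat.card_prod] at h
  have hG : (Nat.card G : ℚ) ≠ 0 := Nat.cast_ne_zero.2 Nat.card_pos.ne'
  have hH : (Nat.card H : ℚ) ≠ 0 := Nat.cast_ne_zero.2 Nat.card_pos.ne'
  push_cast at h
  field_simp at h
  exact_mod_cast h

/-- The cycle types of permutations of six points: multisets of integers `≥ 2` with sum `≤ 6`.
Such a multiset contains `a` at most `6 / a` times, so it lies below `{2, 2, 2, 3, 3, 4, 5, 6}`. -/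
def cycleTypesSix : Finset (Multiset ℕ) :=
  (Multiset.powerset {2, 2, 2, 3, 3, 4, 5, 6}).toFinset.filter fun m => m.sum ≤ 6

lemma mem_cycleTypesSix (m : Multiset ℕ) :
    m ∈ cycleTypesSix ↔ m.sum ≤ 6 ∧ ∀ a ∈ m, 2 ≤ a := by
  rw [cycleTypesSix, Finset.mem_filter, Multiset.mem_toFinset, Multiset.mem_powerset, and_comm]
  refine and_congr_right fun hsum => ⟨fun hle a ha => ?_, fun h2 => Multiset.le_iff_count.2 ?_⟩
  · have := Multiset.mem_of_le hle ha
    simp at this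
    omega
  · intro a
    have hcount : m.count a * a ≤ 6 := by
      refine le_trans ?_ hsum
      obtain ⟨t, ht⟩ := Multiset.le_iff_exists_add.1
        (Multiset.le_count_iff_replicate_le.1 (le_refl (m.count a)))
      have := congrArg Multiset.sum ht
      simp only [Multiset.sum_add, Multiset.sum_replicate, smul_eq_mul] at this
      omega
    by_cases ha : a ∈ m
    · have h2a := h2 a ha
      have hpos := Multiset.count_pos.2 ha
      have ha6 : a ≤ 6 := by nlinarith
      interval_cases a <;> simp <;> omega
    · simp [Multiset.count_eq_zero_of_notMem ha]

lemma card_conjClasses_perm_six : Nat.card (ConjClasses (Perm (Fin 6))) = 11 := by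
  have hmem (σ : Perm (Fin 6)) : σ.cycleType ∈ cycleTypesSix := by
    have := (Perm.exists_with_cycleType_iff (Fin 6)).1 ⟨σ, rfl⟩
    simpa [mem_cycleTypesSix] using this
  have hcard : cycleTypesSix.card = 11 := by decide +kernel
  let f : ConjClasses (Perm (Fin 6)) → cycleTypesSix :=
    Quotient.lift (fun σ => ⟨σ.cycleType, hmem σ⟩) fun σ τ h =>
      Subtype.ext (Perm.isConj_iff_cycleType_eq.1 h)
  have f_mk (σ : Perm (Fin 6)) : (f (ConjClasses.mk σ)).1 = σ.cycleType := rfl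
  have hf : Function.Bijective f := by
    constructor
    · intro c d h
      obtain ⟨σ, rfl⟩ := ConjClasses.mk_surjective c
      obtain ⟨τ, rfl⟩ := ConjClasses.mk_surjective d
      rw [Subtype.ext_iff, f_mk, f_mk] at h
      exact ConjClasses.mk_eq_mk_iff_isConj.2 (Perm.isConj_iff_cycleType_eq.2 h)
    · rintro ⟨m, hm⟩
      obtain ⟨σ, hσ⟩ := (Perm.exists_with_cycleType_iff (Fin 6)).2
        (by simpa using (mem_cycleTypesSix m).1 hm)
      exact ⟨ConjClasses.mk σ, Subtype.ext hσ⟩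
  rw [Nat.card_congr (Equiv.ofBijective f hf), Nat.card_eq_fintype_card, Fintype.card_coe, hcard]

/-- The subgroup of `GL₆(𝔽₂)` generated by the three matrices `a₁`, `a₂`, `a₃` below
(the orthogonal group of the discriminant form of `U(2)² ⊕ [-2]²`) has exactly
`1440` elements and exactly `22` conjugacy classes. -/
theorem card_and_conjClasses_O_disc_U2_U2_2_2 (a₁ a₂ a₃ : GL (Fin 6) (ZMod 2))
    (ha₁ : (a₁ : Matrix (Fin 6) (Fin 6) (ZMod 2)) =
      !![0,0,1,1,1,1; 1,0,1,0,0,0; 1,1,1,1,0,0; 0,1,1,1,1,1; 0,1,0,1,1,0; 0,1,0,1,0,1])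
    (ha₂ : (a₂ : Matrix (Fin 6) (Fin 6) (ZMod 2)) =
      !![0,0,0,1,0,0; 0,0,1,0,0,0; 1,0,0,0,0,0; 0,1,0,0,0,0; 0,0,0,0,1,0; 0,0,0,0,0,1])
    (ha₃ : (a₃ : Matrix (Fin 6) (Fin 6) (ZMod 2)) =
      !![1,0,0,0,0,0; 0,1,0,0,0,0; 0,0,1,0,0,0; 0,0,0,1,0,0; 0,0,0,0,0,1; 0,0,0,0,1,0]) :
    Nat.card (Subgroup.closure ({a₁, a₂, a₃} : Set (GL (Fin 6) (ZMod 2)))) = 1440 ∧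
    Nat.card (ConjClasses
      (Subgroup.closure ({a₁, a₂, a₃} : Set (GL (Fin 6) (ZMod 2))))) = 22 := by
  -- `glRep (s, gen₂) = aᵢ` is checked in the form `P * permRep (s, gen₂) = aᵢ * P`.
  have conj_eq {a : GL (Fin 6) (ZMod 2)} {A : Matrix (Fin 6) (Fin 6) (ZMod 2)} (ha : a.val = A)
      (g : SymTimesTwo) (h : basisMatrix.val * permRep g = A * basisMatrix.val) :
      glRep g = a := by
    change basisMatrix * permRep.toHomUnits g * basisMatrix⁻¹ = a
    rw [mul_inv_eq_iff_eq_mul]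
    ext1
    simpa [ha] using h
  have h₁ : glRep (s₁, gen₂) = a₁ := conj_eq ha₁ _ (by decide +kernel)
  have h₂ : glRep (s₂, gen₂) = a₂ := conj_eq ha₂ _ (by decide +kernel)
  have h₃ : glRep (1, gen₂) = a₃ := conj_eq ha₃ _ (by decide +kernel)
  have hrange : glRep.range = Subgroup.closure {a₁, a₂, a₃} := by
    rw [MonoidHom.range_eq_map, ← closure_gens, MonoidHom.map_closure, Set.image_insert_eq,
      Set.image_pair, h₁, h₂, h₃]
  let e : SymTimesTwo ≃* Subgroup.closure {a₁, a₂, a₃} :=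
    (MonoidHom.ofInjective glRep_injective).trans (MulEquiv.subgroupCongr hrange)
  have hC₂ : Nat.card (Multiplicative (ZMod 2)) = 2 := Nat.card_zmod 2
  constructor
  · rw [← Nat.card_congr e.toEquiv, Nat.card_prod, hC₂, Nat.card_perm, Nat.card_fin]
    rfl
  · rw [← card_conjClasses_congr e, card_conjClasses_prod, card_conjClasses_perm_six,
      ← Nat.card_congr (ConjClasses.mkEquiv (α := Multiplicative (ZMod 2))), hC₂]
end
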